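/- For every continuously differentiable function f on the closed unit ball of ℝ³ and every ε ∈ (0,1), one has (1−ε)·∫_{B₁} f(x)²/|x|² dx ≤ ∫_{∂B₁} f² dσ + ε⁻¹·∫_{B₁} |∇f|² dx. -/

import Mathlib

open MeasureTheory Metric
open scoped RealInnerProductSpace
noncomputable section

abbrev E3 := EuclideanSpace ℝ (Fin 3)

lemma vol_le_prod (b : OrthonormalBasis (Fin 3) ℝ E3) (A : Set E3) :
    volume A ≤ ∏ i, ediam ((fun x => b.repr x i) '' A) := by
  have h1 : volume A = volume ((WithLp.ofLp ∘ b.repr) '' A) := by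
    have hm : MeasurePreserving (WithLp.ofLp ∘ b.repr) volume volume :=
      (PiLp.volume_preserving_ofLp (Fin 3)).comp b.measurePreserving_repr
    have hinj : Function.Injective (WithLp.ofLp ∘ b.repr) :=
      (WithLp.ofLp_injective 2).comp b.repr.injective
    have hemb : MeasurableEmbedding (WithLp.ofLp ∘ b.repr) :=
      (MeasurableEquiv.toLp 2 (Fin 3 → ℝ)).symm.measurableEmbedding.comp
        b.repr.toHomeomorph.measurableEmbedding
    rw [← hm.measure_preimage_emb hemb, Set.preimage_image_eq _ hinj]
  rw [h1]
  refine (Real.volume_pi_le_prod_diam _).trans (le_of_eq ?_)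
  refine Finset.prod_congr rfl fun i _ => ?_
  rw [Set.image_image]
  rfl

lemma exists_basis (p : E3) (hp : ‖p‖ = 1) :
    ∃ b : OrthonormalBasis (Fin 3) ℝ E3, b 2 = p := by
  obtain ⟨b, hb⟩ := Orthonormal.exists_orthonormalBasis_extension_of_card_eq (𝕜 := ℝ) (E := E3)
    (ι := Fin 3) (by simp) (v := fun _ => p) (s := {2}) (by
      constructor
      · intro i; simpa using hp
      · intro i j hij; exact absurd (Subsingleton.elim i j) hij)
  exact ⟨b, hb 2 rfl⟩

def shell (S : Set (sphere (0 : E3) 1)) (h : ℝ) : Set E3 :=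
  {x | ∃ s ∈ S, ∃ r : ℝ, 0 < r ∧ 1 - h ≤ r ∧ r < 1 ∧ x = r • (s : E3)}

lemma shell_vol (S : Set (sphere (0 : E3) 1)) (hS : MeasurableSet S) (h : ℝ) (h0 : 0 < h)
    (h1 : h < 1) :
    (volume : Measure E3).toSphere S * ENNReal.ofReal (h * (1 - h)) ≤ volume (shell S h) := by
  have hmp := (volume : Measure E3).measurePreserving_homeomorphUnitSphereProd
  let a : Set.Ioi (0:ℝ) := ⟨1 - h, by simp [h1]⟩
  let c : Set.Ioi (0:ℝ) := ⟨1, by simp⟩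
  have hac : a ≤ c := by simp only [a, c, Subtype.mk_le_mk]; linarith
  have hI : ENNReal.ofReal (h * (1 - h)) ≤
      Measure.volumeIoiPow (Module.finrank ℝ E3 - 1) (Set.Iio c \ Set.Iio a) := by
    rw [measure_sdiff (Set.Iio_subset_Iio hac) measurableSet_Iio.nullMeasurableSet
      (by rw [Measure.volumeIoiPow_apply_Iio]; simp), Measure.volumeIoiPow_apply_Iio,
      Measure.volumeIoiPow_apply_Iio, ← ENNReal.ofReal_sub _ (by
        have : (0:ℝ) ≤ 1 - h := by linarith
        simp only [a]; positivity)]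
    apply ENNReal.ofReal_le_ofReal
    simp only [a, c, finrank_euclideanSpace_fin]
    norm_num
    nlinarith [pow_pos h0 3]
  calc _ ≤ (volume : Measure E3).toSphere S *
      Measure.volumeIoiPow (Module.finrank ℝ E3 - 1) (Set.Iio c \ Set.Iio a) := by gcongr
    _ = _ := (Measure.prod_prod _ _).symm
    _ = (volume.comap ((↑) : ({0}ᶜ : Set E3) → E3))
        ((homeomorphUnitSphereProd E3) ⁻¹' (S ×ˢ (Set.Iio c \ Set.Iio a))) :=
      (hmp.measure_preimage_emb (Homeomorph.measurableEmbedding _) _).symm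
    _ = volume (Subtype.val '' ((homeomorphUnitSphereProd E3) ⁻¹'
        (S ×ˢ (Set.Iio c \ Set.Iio a)))) := by
      rw [Measure.comap_apply _ Subtype.val_injective]
      · intro s hs
        exact (measurableSet_singleton _).compl.subtype_image hs
      · exact (Homeomorph.measurable _) (hS.prod (measurableSet_Iio.diff measurableSet_Iio))
    _ ≤ _ := by
      apply measure_mono
      rintro _ ⟨x, hx, rfl⟩
      obtain ⟨hx1, hx2, hx3⟩ := hx
      refine ⟨_, hx1, _, ((homeomorphUnitSphereProd E3 x).2).2, not_lt.1 hx3, hx2, ?_⟩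
      have hx0 : ‖(x : E3)‖ ≠ 0 := norm_ne_zero_iff.2 x.2
      simp [smul_smul, hx0]

lemma ediam_le_real (T : Set ℝ) (D : ℝ) (h : ∀ x ∈ T, ∀ y ∈ T, |x - y| ≤ D) :
    ediam T ≤ ENNReal.ofReal D := by
  refine ediam_le fun x hx y hy => ?_
  rw [edist_dist]
  exact ENNReal.ofReal_le_ofReal (h x hx y hy)

lemma sigma_le_aux (S : Set (sphere (0 : E3) 1)) (hS : MeasurableSet S) (h d : ℝ) (h0 : 0 < h)
    (h1 : h < 1) (d0 : 0 ≤ d) (hd : d ≤ h) (hne : S.Nonempty)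
    (hdiam : ∀ x ∈ S, ∀ y ∈ S, dist x y ≤ d) :
    (volume : Measure E3).toSphere S * ENNReal.ofReal (h * (1 - h)) ≤
      ENNReal.ofReal (d ^ 2 * (1 + h) ^ 3 * h) := by
  refine (shell_vol S hS h h0 h1).trans ?_
  obtain ⟨p, hp⟩ := hne
  have hp1 : ‖(p : E3)‖ = 1 := by simpa using p.2
  obtain ⟨b, hb⟩ := exists_basis p hp1
  have hco : ∀ i, ∀ v : E3, |b.repr v i| ≤ ‖v‖ := fun i v => by
    have := PiLp.norm_apply_le (b.repr v) i
    simpa using this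
  have hco2 : ∀ i, ∀ x ∈ S, ∀ y ∈ S, |b.repr (x:E3) i - b.repr (y:E3) i| ≤ d := fun i x hx y hy => by
    have h2 := hdiam x hx y hy
    rw [Subtype.dist_eq, dist_eq_norm] at h2
    have := hco i ((x : E3) - y)
    rw [map_sub] at this
    exact this.trans h2
  have hp0 : ∀ i, i ≠ 2 → b.repr (p:E3) i = 0 := fun i hi => by
    rw [← hb, b.repr_self]; simp [hi]
  have hp2 : b.repr (p:E3) 2 = 1 := by rw [← hb, b.repr_self]; simp
  have hside : ∀ i, i ≠ 2 → ediam ((fun x => b.repr x i) '' shell S h) ≤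
      ENNReal.ofReal (d * (1 + h)) := fun i hi => by
    apply ediam_le_real
    rintro _ ⟨_, ⟨s, hs, r, hr0, hr1, hr2, rfl⟩, rfl⟩ _ ⟨_, ⟨t, ht, q, hq0, hq1, hq2, rfl⟩, rfl⟩
    simp only [map_smul, PiLp.smul_apply, smul_eq_mul]
    have e1 := hco2 i s hs t ht
    have e2 := hco2 i t ht p hp
    rw [hp0 i hi, sub_zero] at e2
    have e3 : r * b.repr (s:E3) i - q * b.repr (t:E3) i =
      r * (b.repr (s:E3) i - b.repr (t:E3) i) + (r - q) * b.repr (t:E3) i := by ring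
    rw [e3]
    refine (abs_add_le _ _).trans ?_
    rw [abs_mul, abs_mul, abs_of_pos hr0]
    have e4 : |r - q| ≤ h := by rw [abs_le]; constructor <;> linarith
    have := mul_le_mul e4 e2 (abs_nonneg _) h0.le
    have := mul_le_mul hr2.le e1 (abs_nonneg _) zero_le_one
    linarith
  have hthird : ediam ((fun x => b.repr x 2) '' shell S h) ≤
      ENNReal.ofReal (h * (1 + h)) := by
    apply ediam_le_real
    have key : ∀ v ∈ shell S h, 1 - h * (1 + h) ≤ b.repr v 2 ∧ b.repr v 2 ≤ 1 := by
      rintro _ ⟨s, hs, r, hr0, hr1, hr2, rfl⟩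
      simp only [map_smul, PiLp.smul_apply, smul_eq_mul]
      have hs1 : ‖(s : E3)‖ = 1 := by simpa using s.2
      have e1 := (abs_le.1 (hco 2 s)).2
      have e2 := hdiam s hs p hp
      rw [Subtype.dist_eq, dist_eq_norm] at e2
      have e3 : b.repr (s:E3) 2 = inner ℝ (p:E3) (s:E3) := by rw [b.repr_apply_apply, hb]
      have e4 := norm_sub_sq_real (s:E3) (p:E3)
      rw [real_inner_comm, ← e3, hs1, hp1] at e4
      have e5 : ‖(s:E3) - p‖ ^ 2 ≤ h ^ 2 := by
        apply pow_le_pow_left₀ (norm_nonneg _); linarith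
      rw [hs1] at e1
      generalize b.repr (s:E3) 2 = z at *
      have hz : 1 - h ^ 2 / 2 ≤ z := by linarith
      have hz0 : 0 ≤ z := by nlinarith
      constructor <;> nlinarith
    rintro _ ⟨v, hv, rfl⟩ _ ⟨w, hw, rfl⟩
    have := key v hv
    have := key w hw
    rw [abs_le]; constructor <;> linarith
  refine (vol_le_prod b _).trans ?_
  rw [Fin.prod_univ_three]
  calc _ ≤ ENNReal.ofReal (d * (1 + h)) * ENNReal.ofReal (d * (1 + h)) *
        ENNReal.ofReal (h * (1 + h)) := by
        gcongr
        · exact hside 0 (by decide)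
        · exact hside 1 (by decide)
    _ = _ := by
      rw [← ENNReal.ofReal_mul (by positivity), ← ENNReal.ofReal_mul (by positivity)]
      congr 1; ring

lemma toSphere_le : (volume : Measure E3).toSphere ≤ μH[2] := by
  have main : ∀ h : ℝ, 0 < h → h < 1 → 
      ENNReal.ofReal ((1 - h) / (1 + h) ^ 3) • (volume : Measure E3).toSphere ≤ μH[2] := by
    intro h h0 h1
    refine Measure.le_hausdorffMeasure _ _ (ENNReal.ofReal h) (by simpa using h0) fun s hs => ?_
    rcases s.eq_empty_or_nonempty with rfl | hne
    · simp
    have hfin : ediam s ≠ ⊤ := ne_top_of_le_ne_top ENNReal.ofReal_ne_top hs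
    have hcl : ediam (closure s) = ediam s := ediam_closure s
    have hd : diam s ≤ h := by
      rw [diam]; exact ENNReal.toReal_le_of_le_ofReal h0.le hs
    have := sigma_le_aux (closure s) isClosed_closure.measurableSet h (diam s) h0 h1 diam_nonneg hd
      hne.closure (fun x hx y hy => by
        rw [← diam_closure]
        exact dist_le_diam_of_mem' (by rwa [hcl]) hx hy)
    have e : ediam s = ENNReal.ofReal (diam s) := (ENNReal.ofReal_toReal hfin).symm
    rw [e, ENNReal.rpow_ofNat, ← ENNReal.ofReal_pow diam_nonneg]
    rw [Measure.smul_apply, smul_eq_mul]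
    calc _ ≤ ENNReal.ofReal ((1 - h) / (1 + h) ^ 3) *
          (volume : Measure E3).toSphere (closure s) := by
          gcongr; exact subset_closure
      _ = ENNReal.ofReal (1 / (h * (1 + h) ^ 3)) * ((volume : Measure E3).toSphere (closure s) * 
          ENNReal.ofReal (h * (1 - h))) := by
          rw [mul_comm (Measure.toSphere _ _), ← mul_assoc, ← ENNReal.ofReal_mul (by positivity)]
          congr 2; field_simp
      _ ≤ ENNReal.ofReal (1 / (h * (1 + h) ^ 3)) * 
          ENNReal.ofReal (diam s ^ 2 * (1 + h) ^ 3 * h) := by gcongr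
      _ = _ := by
          rw [← ENNReal.ofReal_mul (by positivity)]
          congr 1; field_simp
  intro s
  have hlim : Filter.Tendsto (fun h : ℝ => ENNReal.ofReal ((1 - h) / (1 + h) ^ 3) *
      (volume : Measure E3).toSphere s) (nhdsWithin 0 (Set.Ioi 0))
      (nhds (1 * (volume : Measure E3).toSphere s)) := by
    apply ENNReal.Tendsto.mul_const _ (Or.inr (measure_ne_top _ _))
    have : ContinuousAt (fun h : ℝ => (1 - h) / (1 + h) ^ 3) 0 := by
      apply ContinuousAt.div <;> first | fun_prop | norm_num
    have := (ENNReal.continuous_ofReal.continuousAt.comp this).tendsto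
    simp at this
    exact this.mono_left nhdsWithin_le_nhds
  rw [one_mul] at hlim
  refine le_of_tendsto hlim ?_
  filter_upwards [Ioo_mem_nhdsGT (zero_lt_one : (0:ℝ) < 1)] with h hh
  exact main h hh.1 hh.2 s

lemma hausdorff_fin : μH[2] (Set.univ : Set (sphere (0 : E3) 1)) < ⊤ := by
  let Φ : (Fin 2 → ℝ) → E3 := fun u => !₂[Real.sin (u 0) * Real.cos (u 1), 
    Real.sin (u 0) * Real.sin (u 1), Real.cos (u 0)]
  let K : Set (Fin 2 → ℝ) := Set.Icc (fun _ => -4) (fun _ => 4)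
  have hΦ : ContDiff ℝ 1 Φ := by
    rw [contDiff_euclidean]
    intro i
    fin_cases i <;> simp [Φ] <;> fun_prop
  have hK : IsCompact K := isCompact_Icc
  obtain ⟨C, hC⟩ := hΦ.contDiffOn.exists_lipschitzOnWith (s := K) one_ne_zero (convex_Icc _ _) hK
  have h1 := hC.hausdorffMeasure_image_le (d := 2) (by norm_num)
  have h2 : (μH[2] : Measure (Fin 2 → ℝ)) = volume := by
    have := hausdorffMeasure_pi_real (ι := Fin 2)
    simpa using this
  rw [h2] at h1
  have h3 : μH[2] (Φ '' K) < ⊤ := by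
    refine h1.trans_lt (ENNReal.mul_lt_top ?_ hK.measure_lt_top)
    simp
  have h4 : sphere (0 : E3) 1 ⊆ Φ '' K := by
    intro x hx
    have hx1 : x 0 ^ 2 + x 1 ^ 2 + x 2 ^ 2 = 1 := by
      have : ‖x‖ = 1 := by simpa using hx
      have h5 := EuclideanSpace.real_norm_sq_eq x
      rw [this, Fin.sum_univ_three] at h5
      linarith
    have hpi := Real.pi_le_four
    have hz : -1 ≤ x 2 ∧ x 2 ≤ 1 := by constructor <;> nlinarith
    let w : ℂ := ⟨x 0, x 1⟩
    have hw : ‖w‖ = Real.sin (Real.arccos (x 2)) := by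
      rw [Real.sin_arccos, Complex.norm_def, Complex.normSq_apply]
      congr 1
      simp only [w]; linarith
    refine ⟨![Real.arccos (x 2), Complex.arg w], ⟨fun i => ?_, fun i => ?_⟩, ?_⟩
    · fin_cases i
      · simp; linarith [Real.arccos_nonneg (x 2)]
      · simp; linarith [Complex.neg_pi_lt_arg w]
    · fin_cases i
      · simp; linarith [Real.arccos_le_pi (x 2)]
      · simp; linarith [Complex.arg_le_pi w]
    · ext i
      fin_cases i
      · simp [Φ]
        rw [← hw, Complex.norm_mul_cos_arg]
      · simp [Φ]
        rw [← hw, Complex.norm_mul_sin_arg]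
      · simp [Φ, Real.cos_arccos hz.1 hz.2]
  have h5 := (isometry_subtype_coe (s := sphere (0 : E3) 1)).hausdorffMeasure_image
    (d := 2) (Or.inl (by norm_num)) Set.univ
  rw [← h5]
  refine (measure_mono ?_).trans_lt h3
  rwa [Set.image_univ, Subtype.range_coe]

lemma radial_ineq (f : E3 → ℝ) (hf : ContDiffOn ℝ 1 f (closedBall 0 1))
    (ε : ℝ) (hε : ε ∈ Set.Ioo (0:ℝ) 1) (ω : E3) (hω : ‖ω‖ = 1) :
    -(f ω) ^ 2 ≤ ∫ r in (0:ℝ)..1, (ε⁻¹ * (r ^ 2 * ‖fderivWithin ℝ f (closedBall 0 1) (r • ω)‖ ^ 2) -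
      (1 - ε) * (f (r • ω)) ^ 2) := by
  have hmaps : Set.MapsTo (fun r : ℝ => r • ω) (Set.Icc 0 1) (closedBall (0:E3) 1) := by
    intro r hr
    simp [norm_smul, hω, abs_of_nonneg hr.1, hr.2]
  have hud : UniqueDiffOn ℝ (closedBall (0:E3) 1) :=
    uniqueDiffOn_convex (convex_closedBall _ _) (by
      rw [interior_closedBall _ one_ne_zero]; exact ⟨0, by simp⟩)
  have hcf : ContinuousOn (fun r : ℝ => f (r • ω)) (Set.Icc 0 1) :=
    hf.continuousOn.comp (by fun_prop) hmaps
  have hcd : ContinuousOn (fun r : ℝ => fderivWithin ℝ f (closedBall 0 1) (r • ω)) (Set.Icc 0 1) :=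
    (hf.continuousOn_fderivWithin hud le_rfl).comp (by fun_prop) hmaps
  have key := intervalIntegral.sub_le_integral_of_hasDeriv_right_of_le (a := 0) (b := 1)
    (g := fun r : ℝ => -(r * (f (r • ω)) ^ 2))
    (g' := fun r : ℝ => -((f (r • ω)) ^ 2 + r * (2 * f (r • ω) *
      fderivWithin ℝ f (closedBall 0 1) (r • ω) ω)))
    (φ := fun r : ℝ => ε⁻¹ * (r ^ 2 * ‖fderivWithin ℝ f (closedBall 0 1) (r • ω)‖ ^ 2) -
      (1 - ε) * (f (r • ω)) ^ 2) zero_le_one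
    ((continuousOn_id.mul (hcf.pow 2)).neg) ?_ ?_ ?_
  · simpa using key
  · intro r hr
    apply HasDerivAt.hasDerivWithinAt
    have hmem : closedBall (0:E3) 1 ∈ nhds (r • ω) := by
      apply closedBall_mem_nhds_of_mem
      simp [norm_smul, hω, abs_of_pos hr.1, hr.2]
    have h1 : HasFDerivAt f (fderivWithin ℝ f (closedBall 0 1) (r • ω)) (r • ω) :=
      ((hf.differentiableOn one_ne_zero _ (hmaps ⟨hr.1.le, hr.2.le⟩)).hasFDerivWithinAt).hasFDerivAt
        hmem
    have h2 : HasDerivAt (fun r : ℝ => r • ω) ω r := by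
      simpa using (hasDerivAt_id r).smul_const ω
    have h3 := h1.comp_hasDerivAt r h2
    have h4 := ((hasDerivAt_id r).mul (h3.pow 2)).neg
    refine HasDerivAt.congr_deriv h4 ?_
    simp
  · apply ContinuousOn.integrableOn_Icc
    exact (continuousOn_const.mul ((continuousOn_id.pow 2).mul (hcd.norm.pow 2))).sub
      (continuousOn_const.mul (hcf.pow 2))
  · intro r hr
    have h1 := (fderivWithin ℝ f (closedBall 0 1) (r • ω)).le_opNorm ω
    rw [hω, mul_one, Real.norm_eq_abs] at h1
    have h2 := pow_le_pow_left₀ (abs_nonneg _) h1 2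
    rw [sq_abs] at h2
    generalize fderivWithin ℝ f (closedBall 0 1) (r • ω) = D at *
    generalize f (r • ω) = y at *
    obtain ⟨e0, e1⟩ := hε
    have h3 : 0 ≤ ε⁻¹ * (ε * y + r * D ω) ^ 2 := by positivity
    have h4 : ε⁻¹ * (ε * y + r * D ω) ^ 2 = ε * y ^ 2 + 2 * r * y * D ω +
        ε⁻¹ * (r ^ 2 * (D ω) ^ 2) := by field_simp; ring
    have h5 : ε⁻¹ * (r ^ 2 * (D ω) ^ 2) ≤ ε⁻¹ * (r ^ 2 * ‖D‖ ^ 2) := by gcongr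
    linarith

/-- Polar coordinates for a function integrable on the unit ball. -/
lemma polar (K : E3 → ℝ) (hK : IntegrableOn K (ball 0 1)) :
    Integrable (fun ω : sphere (0:E3) 1 => ∫ r in (0:ℝ)..1, r ^ 2 * K (r • (ω : E3)))
      (volume : Measure E3).toSphere ∧
    ∫ x in ball (0:E3) 1, K x = ∫ ω : sphere (0:E3) 1,
      (∫ r in (0:ℝ)..1, r ^ 2 * K (r • (ω : E3))) ∂(volume : Measure E3).toSphere := by
  have hmp := (volume : Measure E3).measurePreserving_homeomorphUnitSphereProd
  have hemb := (homeomorphUnitSphereProd E3).measurableEmbedding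
  set k : E3 → ℝ := (ball 0 1).indicator K with hk
  have hki : Integrable k := (integrable_indicator_iff measurableSet_ball).2 hK
  let g : sphere (0:E3) 1 × Set.Ioi (0:ℝ) → ℝ := fun p => k (p.2.1 • p.1.1)
  have hg : ∀ x : ({0}ᶜ : Set E3), g (homeomorphUnitSphereProd E3 x) = k x := fun x => by
    have hx0 : ‖(x : E3)‖ ≠ 0 := norm_ne_zero_iff.2 x.2
    simp [g, smul_smul, hx0]
  have hgi : Integrable g ((volume : Measure E3).toSphere.prod
      (Measure.volumeIoiPow (Module.finrank ℝ E3 - 1))) := by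
    rw [← hmp.integrable_comp_emb hemb]
    have : g ∘ (homeomorphUnitSphereProd E3) = k ∘ Subtype.val := funext hg
    rw [this, ← integrableOn_iff_comap_subtypeVal (measurableSet_singleton _).compl]
    exact hki.integrableOn
  have hinner : ∀ ω : sphere (0:E3) 1,
      ∫ r, g (ω, r) ∂(Measure.volumeIoiPow (Module.finrank ℝ E3 - 1)) =
      ∫ r in (0:ℝ)..1, r ^ 2 * K (r • (ω : E3)) := fun ω => by
    have hω : ‖(ω : E3)‖ = 1 := by simp
    rw [Measure.volumeIoiPow, integral_withDensity_eq_integral_toReal_smul (by fun_prop) (by simp)]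
    have : ∀ r : Set.Ioi (0:ℝ), (ENNReal.ofReal (r.1 ^ (Module.finrank ℝ E3 - 1))).toReal • g (ω, r)
        = (fun r : ℝ => (Set.Ioo (0:ℝ) 1).indicator (fun r => r ^ 2 * K (r • (ω : E3))) r) r := by
      rintro ⟨r, hr⟩
      have hr' : 0 < r := hr
      rw [ENNReal.toReal_ofReal (by positivity)]
      by_cases h1 : r < 1 <;> 
      simp [g, hk, Set.indicator, norm_smul, hω, abs_of_pos hr', hr', h1]
    simp_rw [this]
    rw [integral_subtype_comap measurableSet_Ioi
      (fun r : ℝ => (Set.Ioo (0:ℝ) 1).indicator (fun r => r ^ 2 * K (r • (ω : E3))) r),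
      setIntegral_indicator measurableSet_Ioo, intervalIntegral.integral_of_le zero_le_one,
      integral_Ioc_eq_integral_Ioo]
    congr 2
    ext r; simp
  constructor
  · have := hgi.integral_prod_left
    simpa only [hinner] using this
  · rw [← integral_indicator measurableSet_ball, ← hk]
    simp_rw [← hinner]
    rw [← integral_prod _ hgi, ← hmp.integral_comp hemb]
    simp_rw [hg]
    rw [integral_subtype_comap (measurableSet_singleton _).compl, restrict_compl_singleton]

theorem hardy_inequality_with_boundary
    (f : EuclideanSpace ℝ (Fin 3) → ℝ)
    (hf : ContDiffOn ℝ 1 f (Metric.closedBall 0 1))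
    (ε : ℝ) (hε : ε ∈ Set.Ioo (0:ℝ) 1) :
    (1 - ε) * ∫ x in Metric.ball (0 : EuclideanSpace ℝ (Fin 3)) 1, (f x) ^ 2 / ‖x‖ ^ 2 ≤
      (∫ x in Metric.sphere (0 : EuclideanSpace ℝ (Fin 3)) 1, (f x) ^ 2 ∂μH[2]) +
        ε⁻¹ * ∫ x in Metric.ball (0 : EuclideanSpace ℝ (Fin 3)) 1, ‖gradient f x‖ ^ 2 := by
  have hud : UniqueDiffOn ℝ (closedBall (0:E3) 1) :=
    uniqueDiffOn_convex (convex_closedBall _ _) (by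
      rw [interior_closedBall _ one_ne_zero]; exact ⟨0, by simp⟩)
  have hcd := hf.continuousOn_fderivWithin hud le_rfl
  have hcpt : IsCompact (closedBall (0:E3) 1) := isCompact_closedBall _ _
  set G : E3 → ℝ := fun x => ‖fderivWithin ℝ f (closedBall 0 1) x‖ ^ 2 with hG
  have hGeq : Set.EqOn (fun x => ‖gradient f x‖ ^ 2) G (ball 0 1) := fun x hx => by
    simp only [hG, gradient, LinearIsometryEquiv.norm_map]
    rw [fderivWithin_of_mem_nhds (closedBall_mem_nhds_of_mem hx)]
  rw [setIntegral_congr_fun measurableSet_ball hGeq]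
  have hGi : IntegrableOn G (ball 0 1) :=
    (ContinuousOn.integrableOn_compact hcpt (by fun_prop)).mono_set ball_subset_closedBall
  have hni : IntegrableOn (fun x : E3 => (‖x‖ ^ 2)⁻¹) (ball 0 1) := by
    rw [integrableOn_fun_norm_addHaar volume (f := fun y : ℝ => (y ^ 2)⁻¹)]
    refine IntegrableOn.congr_fun (f := fun _ => (1:ℝ)) (by simp) ?_ measurableSet_Ioo
    intro y hy
    have := hy.1.ne'
    simp [this]
  obtain ⟨M, hM⟩ := hcpt.exists_bound_of_continuousOn (hf.continuousOn.pow 2)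
  have hFi : IntegrableOn (fun x => (f x) ^ 2 / ‖x‖ ^ 2) (ball 0 1) := by
    simp_rw [div_eq_mul_inv]
    refine Integrable.bdd_mul (c := M) hni ?_ ?_
    · exact ((hf.continuousOn.pow 2).mono ball_subset_closedBall).aestronglyMeasurable
        measurableSet_ball
    · filter_upwards [ae_restrict_mem measurableSet_ball] with x hx
      exact hM x (ball_subset_closedBall hx)
  obtain ⟨p1, p2⟩ := polar (fun x => ε⁻¹ * G x - (1 - ε) * ((f x) ^ 2 / ‖x‖ ^ 2))
    (Integrable.sub (hGi.const_mul ε⁻¹) (hFi.const_mul (1 - ε)))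
  rw [integral_sub (hGi.const_mul _) (hFi.const_mul _), integral_const_mul, integral_const_mul] at p2
  have hfs : Continuous (fun ω : sphere (0:E3) 1 => (f ω) ^ 2) :=
    ((hf.continuousOn.mono sphere_subset_closedBall).domRestrict).pow 2
  have : IsFiniteMeasure (μH[2] : Measure (sphere (0:E3) 1)) := ⟨hausdorff_fin⟩
  have hint : ∀ μ : Measure (sphere (0:E3) 1), IsFiniteMeasure μ →
      Integrable (fun ω : sphere (0:E3) 1 => (f ω) ^ 2) μ := fun μ _ =>
    hfs.integrable_of_hasCompactSupport (HasCompactSupport.of_compactSpace _)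
  have hH : ∫ x in sphere (0 : E3) 1, (f x) ^ 2 ∂μH[2] =
      ∫ ω : sphere (0:E3) 1, (f ω) ^ 2 ∂μH[2] := by
    have h1 := (isometry_subtype_coe (s := sphere (0 : E3) 1)).map_hausdorffMeasure
      (d := 2) (Or.inl (by norm_num))
    rw [Subtype.range_coe] at h1
    rw [← h1, (MeasurableEmbedding.subtype_coe isClosed_sphere.measurableSet).integral_map]
  have hσ : ∫ ω : sphere (0:E3) 1, (f ω) ^ 2 ∂(volume : Measure E3).toSphere ≤
      ∫ ω : sphere (0:E3) 1, (f ω) ^ 2 ∂μH[2] :=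
    integral_mono_measure toSphere_le (Filter.Eventually.of_forall fun _ => sq_nonneg _)
      (hint _ inferInstance)
  have hlow : ∫ ω : sphere (0:E3) 1, -(f ω) ^ 2 ∂(volume : Measure E3).toSphere ≤ _ :=
    integral_mono (hint _ inferInstance).neg p1 (fun ω => by
      refine (radial_ineq f hf ε hε ω (by simp)).trans (le_of_eq ?_)
      rw [intervalIntegral.integral_of_le zero_le_one, intervalIntegral.integral_of_le zero_le_one]
      refine setIntegral_congr_fun measurableSet_Ioc fun r hr => ?_
      have hr0 := hr.1.ne'
      simp only [hG, norm_smul, norm_eq_of_mem_sphere, Real.norm_eq_abs, mul_one, sq_abs]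
      field_simp)
  rw [← p2, integral_neg] at hlow
  rw [hH]
  linarith
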